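/- arXiv:2410.08073 — 2 statements merged into one kernel-verified Lean document; each statement's English description precedes it below -/
import Mathlib

section
/- Fix integers n ≥ 1 and r ≥ 1, and let x, x′ : Fin r → 𝔽₂ⁿ be tuples with no common entry (x_i ≠ x′_j for all i, j ∈ Fin r). Then 2r · #{a ∈ 𝔽₂ⁿ : ∑_{j} χ(a, x_j) ≠ ∑_{j} χ(a, x′_j)} ≥ 2ⁿ, where the sums are taken in ℤ. -/
/-- The integer-valued character `χ(a, x) = (-1)^{⟨a,x⟩}` on `𝔽₂ⁿ`. -/
def chi {ι : Type*} [Fintype ι] (a x : ι → ZMod 2) : ℤ :=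
  if ∑ i, a i * x i = 0 then 1 else -1

lemma chi_add {ι : Type*} [Fintype ι] (a b x : ι → ZMod 2) :
    chi (a + b) x = chi a x * chi b x := by
  unfold chi
  have h : ∑ i, (a + b) i * x i = ∑ i, a i * x i + ∑ i, b i * x i := by
    simp [add_mul, Finset.sum_add_distrib]
  rw [h]
  generalize ∑ i, a i * x i = u
  generalize ∑ i, b i * x i = v
  revert u v
  decide

lemma chi_sq {ι : Type*} [Fintype ι] (a x : ι → ZMod 2) : chi a x * chi a x = 1 := by
  unfold chi
  split_ifs <;> norm_num

lemma chi_abs {ι : Type*} [Fintype ι] (a x : ι → ZMod 2) : |chi a x| = 1 := by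
  unfold chi
  split_ifs <;> norm_num

lemma chi_single {ι : Type*} [Fintype ι] [DecidableEq ι] (i : ι) (x : ι → ZMod 2) :
    chi (Pi.single i 1) x = if x i = 0 then 1 else -1 := by
  unfold chi
  simp [Pi.single_apply]

lemma chi_orth {n : ℕ} (x y : Fin n → ZMod 2) :
    ∑ a, chi a x * chi a y = if x = y then (2 : ℤ) ^ n else 0 := by
  split_ifs with h
  · subst h
    simp [chi_sq, ZMod.card]
  · obtain ⟨i, hi⟩ := Function.ne_iff.mp h
    have h1 : ∑ a, chi a x * chi a y = ∑ a, -(chi a x * chi a y) := by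
      rw [← Equiv.sum_comp (Equiv.addRight (Pi.single i (1 : ZMod 2)))]
      refine Finset.sum_congr rfl fun a _ => ?_
      have h2 : chi (Pi.single i 1) x * chi (Pi.single i 1) y = -1 := by
        rw [chi_single, chi_single]
        generalize x i = u at *
        generalize y i = v at *
        revert u v
        decide
      rw [Equiv.coe_addRight, chi_add, chi_add]
      linear_combination (chi a x * chi a y) * h2
    rw [Finset.sum_neg_distrib] at h1
    linarith

/-- Parseval-type support lower bound: if the tuples `x, x'` share no common entry, then
`2r · #{a : ∑_j χ(a,x_j) ≠ ∑_j χ(a,x'_j)} ≥ 2ⁿ`. -/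
theorem stmt1 (n r : ℕ) (hn : 1 ≤ n) (hr : 1 ≤ r)
    (x x' : Fin r → (Fin n → ZMod 2))
    (hdisj : ∀ i j, x i ≠ x' j) :
    2 ^ n ≤ 2 * r * (Finset.univ.filter
      (fun a : Fin n → ZMod 2 =>
        (∑ j, chi a (x j)) ≠ ∑ j, chi a (x' j))).card := by
  classical
  set S := Finset.univ.filter
      (fun a : Fin n → ZMod 2 => (∑ j, chi a (x j)) ≠ ∑ j, chi a (x' j)) with hS
  set y := x ⟨0, hr⟩ with hy
  have key : ∑ a, (∑ j, chi a (x j) - ∑ j, chi a (x' j)) * chi a y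
      = ∑ j, (if x j = y then (2 : ℤ) ^ n else 0) := by
    simp only [sub_mul, Finset.sum_mul, Finset.sum_sub_distrib]
    rw [Finset.sum_comm, Finset.sum_comm (s := Finset.univ (α := Fin n → ZMod 2))]
    simp only [chi_orth]
    have h0 : ∀ j, x' j ≠ y := fun j h => hdisj ⟨0, hr⟩ j h.symm
    simp [h0]
  have lower : (2 : ℤ) ^ n ≤ ∑ j, (if x j = y then (2 : ℤ) ^ n else 0) := by
    have h := Finset.single_le_sum (f := fun j => if x j = y then (2 : ℤ) ^ n else 0)
      (s := Finset.univ) (fun j _ => by split_ifs <;> positivity)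
      (Finset.mem_univ (⟨0, hr⟩ : Fin r))
    simpa [hy] using h
  have bd : ∀ (a : Fin n → ZMod 2) (z : Fin r → Fin n → ZMod 2), |∑ j, chi a (z j)| ≤ (r : ℤ) := by
    intro a z
    refine (Finset.abs_sum_le_sum_abs _ _).trans ?_
    simp [chi_abs]
  have upper : ∑ a, (∑ j, chi a (x j) - ∑ j, chi a (x' j)) * chi a y ≤ 2 * r * (S.card : ℤ) := by
    have h1 : ∀ a, (∑ j, chi a (x j) - ∑ j, chi a (x' j)) * chi a y
        ≤ if (∑ j, chi a (x j)) ≠ ∑ j, chi a (x' j) then (2 * r : ℤ) else 0 := by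
      intro a
      split_ifs with h
      · refine (le_abs_self _).trans ?_
        rw [abs_mul, chi_abs, mul_one]
        refine (abs_sub _ _).trans ?_
        linarith [bd a x, bd a x']
      · rw [not_not] at h
        simp [h]
    refine (Finset.sum_le_sum fun a _ => h1 a).trans ?_
    rw [← Finset.sum_filter, ← hS, Finset.sum_const, nsmul_eq_mul, mul_comm]
  have := lower.trans (key ▸ upper)
  exact_mod_cast this
end

section
/- Let n ≥ 1, t ≥ 1 and q > 2t be integers, and let x, x′ : Fin t → 𝔽₂ⁿ be tuples. Then (1/q^{2ⁿ}) · ∑_{φ : 𝔽₂ⁿ → Fin q} e_q( ∑_{j ∈ Fin t} ( φ(x_j) − φ(x′_j) ) ) equals 1 if x and x′ are equal as multisets (x′ = x ∘ σ for some permutation σ of Fin t) and equals 0 otherwise, where the φ-values are lifted to ℤ in the exponent. -/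
/-- `e_q(s) = exp(2πi·s/q)`. -/
noncomputable def expq (q : ℕ) (s : ℤ) : ℂ :=
  Complex.exp (2 * Real.pi * Complex.I * s / q)

lemma expq_add (q : ℕ) (a b : ℤ) : expq q (a + b) = expq q a * expq q b := by
  unfold expq
  rw [← Complex.exp_add]
  congr 1
  push_cast
  ring

lemma expq_zero (q : ℕ) : expq q 0 = 1 := by simp [expq]

lemma expq_sum (q : ℕ) {ι : Type*} (s : Finset ι) (f : ι → ℤ) :
    expq q (∑ i ∈ s, f i) = ∏ i ∈ s, expq q (f i) := by
  classical
  induction s using Finset.induction_on with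
  | empty => simp [expq_zero]
  | insert a s ha ih => rw [Finset.sum_insert ha, Finset.prod_insert ha, expq_add, ih]

lemma expq_mul_nat (q : ℕ) (c : ℤ) (k : ℕ) : expq q (c * k) = expq q c ^ k := by
  unfold expq
  rw [← Complex.exp_nat_mul]
  congr 1
  push_cast
  ring

lemma expq_sum_zero (q : ℕ) (hq : 0 < q) (c : ℤ) (h0 : c ≠ 0) (hc : |c| < q) :
    ∑ k : Fin q, expq q (c * ((k : ℕ) : ℤ)) = 0 := by
  have hqc : (q : ℂ) ≠ 0 := by exact_mod_cast hq.ne'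
  have h1 : expq q c ≠ 1 := by
    intro h
    unfold expq at h
    obtain ⟨m, hm⟩ := Complex.exp_eq_one_iff.1 h
    have hpi := Complex.two_pi_I_ne_zero
    have h2 : (c : ℂ) = m * q := by
      rw [div_eq_iff hqc] at hm
      apply mul_left_cancel₀ hpi
      rw [hm]
      ring
    have h3 : c = m * q := by exact_mod_cast h2
    exact h0 (Int.eq_zero_of_abs_lt_dvd ⟨m, by rw [h3, mul_comm]⟩ hc)
  have h2 : expq q c ^ q = 1 := by
    rw [← expq_mul_nat]
    unfold expq
    rw [Complex.exp_eq_one_iff]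
    refine ⟨c, ?_⟩
    push_cast
    field_simp
  simp_rw [expq_mul_nat]
  rw [Fin.sum_univ_eq_sum_range (fun k => expq q c ^ k) q, geom_sum_eq h1, h2]
  simp

lemma exists_perm_of_fibers {t : ℕ} {Y : Type*} [DecidableEq Y] (x x' : Fin t → Y)
    (h : ∀ y, Fintype.card {j // x j = y} = Fintype.card {j // x' j = y}) :
    ∃ σ : Equiv.Perm (Fin t), x' = x ∘ σ := by
  let e : ∀ y, {j // x' j = y} ≃ {j // x j = y} := fun y => Fintype.equivOfCardEq (h y).symm
  refine ⟨(Equiv.sigmaFiberEquiv x').symm.trans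
    ((Equiv.sigmaCongrRight e).trans (Equiv.sigmaFiberEquiv x)), ?_⟩
  funext j
  exact ((e (x' j)) ⟨j, rfl⟩).2.symm

lemma sum_fiber {t : ℕ} {Y : Type*} [Fintype Y] [DecidableEq Y] (x : Fin t → Y) (f : Y → ℤ) :
    ∑ j, f (x j) = ∑ y, (Fintype.card {j // x j = y} : ℤ) * f y := by
  rw [← Finset.sum_fiberwise Finset.univ x]
  refine Finset.sum_congr rfl fun y _ => ?_
  rw [Finset.sum_congr rfl (g := fun _ => f y)
    (fun j hj => by rw [(Finset.mem_filter.1 hj).2])]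
  rw [Finset.sum_const, nsmul_eq_mul, Fintype.card_subtype]

/-- The `(x,x')` diagonal entry of the `t`-th moment operator of a uniformly random diagonal
unitary with `q`-th-root-of-unity phases (`q > 2t`) is the indicator that `x` and `x'` are
permutation-related. -/
theorem stmt7 (n t q : ℕ) (hn : 1 ≤ n) (ht : 1 ≤ t) (hq : 2 * t < q)
    (x x' : Fin t → (Fin n → ZMod 2)) :
    (1 / (q : ℂ) ^ (2 ^ n)) *
      ∑ φ : (Fin n → ZMod 2) → Fin q,
        expq q (∑ j, (((φ (x j) : ℕ) : ℤ) - ((φ (x' j) : ℕ) : ℤ)))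
      = if ∃ σ : Equiv.Perm (Fin t), x' = x ∘ σ then 1 else 0 := by
  have hq0 : 0 < q := by omega
  have hqc : (q : ℂ) ≠ 0 := by exact_mod_cast hq0.ne'
  split_ifs with h
  · obtain ⟨σ, rfl⟩ := h
    have hz : ∀ φ : (Fin n → ZMod 2) → Fin q,
        expq q (∑ j, (((φ (x j) : ℕ) : ℤ) - ((φ ((x ∘ σ) j) : ℕ) : ℤ))) = 1 := by
      intro φ
      rw [Finset.sum_sub_distrib]
      have := Equiv.sum_comp σ (fun j => ((φ (x j) : ℕ) : ℤ))
      simp only [Function.comp_apply]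
      rw [this, sub_self, expq_zero]
    simp only [hz]
    simp [hqc]
  · have hy : ∃ y, Fintype.card {j // x j = y} ≠ Fintype.card {j // x' j = y} := by
      by_contra hcon
      push Not at hcon
      exact h (exists_perm_of_fibers x x' hcon)
    obtain ⟨y, hy⟩ := hy
    let c : (Fin n → ZMod 2) → ℤ := fun y =>
      (Fintype.card {j // x j = y} : ℤ) - (Fintype.card {j // x' j = y} : ℤ)
    have hz : ∀ φ : (Fin n → ZMod 2) → Fin q,
        expq q (∑ j, (((φ (x j) : ℕ) : ℤ) - ((φ (x' j) : ℕ) : ℤ)))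
          = ∏ y, expq q (c y * ((φ y : ℕ) : ℤ)) := by
      intro φ
      rw [Finset.sum_sub_distrib, sum_fiber x (fun y => ((φ y : ℕ) : ℤ)),
        sum_fiber x' (fun y => ((φ y : ℕ) : ℤ)), ← Finset.sum_sub_distrib, ← expq_sum]
      congr 1
      refine Finset.sum_congr rfl fun y _ => ?_
      simp only [c]
      ring
    simp only [hz]
    have key := Finset.prod_univ_sum (fun _ : Fin n → ZMod 2 => (Finset.univ : Finset (Fin q)))
      (fun y k => expq q (c y * ((k : ℕ) : ℤ)))
    rw [Fintype.piFinset_univ] at key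
    rw [← key, Finset.prod_eq_zero (Finset.mem_univ y), mul_zero]
    have b1 := Fintype.card_subtype_le (fun j => x j = y)
    have b2 := Fintype.card_subtype_le (fun j => x' j = y)
    rw [Fintype.card_fin] at b1 b2
    apply expq_sum_zero q hq0
    · simp only [c]
      omega
    · simp only [c]
      rw [abs_lt]
      constructor <;> omega
end
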